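/- Let n ≥ 1, a ∈ (−1,1), and fix X₁ = (x₁,y₁) ∈ ℝⁿ × (0,∞). Define 𝒢(X₁,X,t) = p(x₁,x,t) · p^{(a)}(y₁,y,t) for X = (x,y) ∈ ℝⁿ × (0,∞) and t > 0, where p(x₁,x,t) = (4πt)^{−n/2} e^{−|x₁−x|²/(4t)} and p^{(a)}(y₁,y,t) = (2t)^{−(1+a)/2} e^{−(y₁²+y²)/(4t)} Σ_{k=0}^∞ [2^{(1−a)/2} (y₁ y/(4t))^{2k}] / [k! Γ(k + (a+1)/2)]. Then for every bounded continuous function φ : ℝⁿ × [0,∞) → ℝ one has lim_{t → 0⁺} ∫_{ℝⁿ × (0,∞)} φ(X) 𝒢(X₁,X,t) y^a dX = φ(X₁). -/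

import Mathlib

/-!
The kernel is nonnegative, and both factors have explicit Laplace transforms: for `θ ≥ 0`,
`∫ e^{-θ|x₁-x|²} p(x₁,x,t) dx = (1+4tθ)^{-n/2}` and
`∫₀^∞ e^{-θy²} p^{(a)}(y₁,y,t) y^a dy = (1+4tθ)^{-(a+1)/2} e^{-y₁²θ/(1+4tθ)}`.
The second one comes from integrating the series term by term: each term is a Gamma integral whose
value cancels the `Γ(k+(a+1)/2)` in the denominator and leaves an exponential series.

At `θ = 0` these say that `𝒢 y^a dX` is a probability measure. Concentration at `X₁` follows from
a Chebyshev argument with the gauge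
`D(X) = (1 - e^{-|x₁-x|²}) + (e^{-y²} - e^{-y₁²})²`, which is nonnegative and bounded below away
from `X₁`. After expanding the square, the integral of `D` against the kernel is a combination of
the Laplace transforms at `θ = 0, 1, 2`, and it tends to `0` with `t`. Since `φ` is bounded and
continuous at `X₁`, for every `ε` there is `C` with `|φ(X) - φ(X₁)| ≤ ε + C D(X)`, and integrating
this inequality gives the limit.
-/

open MeasureTheory Filter Topology

/-- The Gauss–Weierstrass kernel `p(x₁,x,t) = (4πt)^{-n/2} e^{-|x₁-x|²/(4t)}`. -/
noncomputable def gaussKernel' {n : ℕ} (x₁ x : EuclideanSpace ℝ (Fin n)) (t : ℝ) : ℝ :=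
  (4 * Real.pi * t) ^ (-(n : ℝ) / 2) * Real.exp (-‖x₁ - x‖ ^ 2 / (4 * t))

/-- The Bessel heat kernel with Neumann condition. -/
noncomputable def besselHeatKernel (a y₁ y t : ℝ) : ℝ :=
  (2 * t) ^ (-(1 + a) / 2) * Real.exp (-(y₁ ^ 2 + y ^ 2) / (4 * t)) *
    ∑' k : ℕ, (2 : ℝ) ^ ((1 - a) / 2) * (y₁ * y / (4 * t)) ^ (2 * k) /
      (k.factorial * Real.Gamma ((k : ℝ) + (a + 1) / 2))

lemma integral_exp_mul_gaussKernel' {n : ℕ} (x₁ : EuclideanSpace ℝ (Fin n)) {t θ : ℝ}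
    (ht : 0 < t) (hθ : 0 ≤ θ) :
    ∫ x, Real.exp (-θ * ‖x₁ - x‖ ^ 2) * gaussKernel' x₁ x t
      = (1 + 4 * t * θ) ^ (-(n : ℝ) / 2) := by
  have hb : 0 < 1 / (4 * t) + θ := by positivity
  have h1 : ∀ x, Real.exp (-θ * ‖x₁ - x‖ ^ 2) * gaussKernel' x₁ x t
      = (4 * Real.pi * t) ^ (-(n : ℝ) / 2) *
        Real.exp (-(1 / (4 * t) + θ) * ‖x₁ - x‖ ^ 2) := by
    intro x
    rw [gaussKernel', mul_left_comm, ← Real.exp_add]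
    congr 2
    field_simp
    ring
  simp_rw [h1]
  rw [integral_const_mul, integral_sub_left_eq_self
    (fun x => Real.exp (-(1 / (4 * t) + θ) * ‖x‖ ^ 2)) volume x₁,
    GaussianFourier.integral_rexp_neg_mul_sq_norm hb, finrank_euclideanSpace_fin]
  have h2 : Real.pi / (1 / (4 * t) + θ) = (4 * Real.pi * t) * (1 + 4 * t * θ)⁻¹ := by
    field_simp
  have hp := Real.pi_pos
  rw [h2, Real.mul_rpow (x := 4 * Real.pi * t) (by positivity) (by positivity), ← mul_assoc,
    ← Real.rpow_add (by positivity), Real.inv_rpow (by positivity),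
    ← Real.rpow_neg (by positivity)]
  have h3 : -(n : ℝ) / 2 + n / 2 = 0 := by ring
  rw [h3, Real.rpow_zero, one_mul, neg_div]

/-- Up to a constant, the `k`-th term of the series of the weighted Bessel kernel, tested against
`e^{-θ y²}`, is this Gamma integral with `b = 1/(4t) + θ`. -/
lemma integral_besselTerm {b ν a : ℝ} (hb : 0 < b) (ha : -1 < a) (hν : ν = (a + 1) / 2) (k : ℕ) :
    IntegrableOn (fun y : ℝ => y ^ (2 * k + a) * Real.exp (-b * y ^ 2)) (Set.Ioi 0) ∧
    ∫ y in Set.Ioi (0 : ℝ), y ^ (2 * k + a) * Real.exp (-b * y ^ 2)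
      = b ^ (-ν) * (b⁻¹) ^ k * (1 / 2) * Real.Gamma (k + ν) := by
  have hk : (-1 : ℝ) < 2 * k + a := by
    have : (0 : ℝ) ≤ k := Nat.cast_nonneg k
    linarith
  refine ⟨integrableOn_rpow_mul_exp_neg_mul_sq hb hk, ?_⟩
  have h := integral_rpow_mul_exp_neg_mul_rpow (p := 2) two_pos hk hb
  simp_rw [Real.rpow_two] at h
  have e1 : -(2 * (k : ℝ) + a + 1) / 2 = -ν + -(k : ℝ) := by rw [hν]; ring
  have e2 : (2 * (k : ℝ) + a + 1) / 2 = k + ν := by rw [hν]; ring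
  rw [h, e1, e2, Real.rpow_add hb, Real.rpow_neg hb.le (k : ℝ), Real.rpow_natCast, inv_pow]

lemma integral_exp_mul_besselHeatKernel {a y₁ t θ : ℝ} (ha : -1 < a) (ht : 0 < t) (hθ : 0 ≤ θ) :
    ∫ y in Set.Ioi (0 : ℝ), Real.exp (-θ * y ^ 2) * (besselHeatKernel a y₁ y t * y ^ a)
      = (1 + 4 * t * θ) ^ (-((a + 1) / 2)) * Real.exp (-(y₁ ^ 2 * θ / (1 + 4 * t * θ))) := by
  obtain ⟨ν, hν⟩ : ∃ ν, ν = (a + 1) / 2 := ⟨_, rfl⟩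
  have hν0 : 0 < ν := by rw [hν]; linarith
  obtain ⟨b, hbdef⟩ : ∃ b, b = 1 / (4 * t) + θ := ⟨_, rfl⟩
  have hb : 0 < b := by rw [hbdef]; positivity
  have hΓ : ∀ k : ℕ, 0 < Real.Gamma (k + ν) := fun k => Real.Gamma_pos_of_pos (by positivity)
  set c : ℕ → ℝ := fun k => (2 * t) ^ (-ν) * Real.exp (-y₁ ^ 2 / (4 * t)) *
    ((2 : ℝ) ^ ((1 - a) / 2) * (y₁ / (4 * t)) ^ (2 * k) / (k.factorial * Real.Gamma (k + ν)))
    with hc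
  have hc0 : ∀ k, 0 ≤ c k := by
    intro k
    have := hΓ k
    have h2 : 0 ≤ (y₁ / (4 * t)) ^ (2 * k) := by rw [pow_mul]; positivity
    simp only [hc]
    positivity
  set F : ℕ → ℝ → ℝ := fun k y => c k * (y ^ (2 * k + a) * Real.exp (-b * y ^ 2)) with hF
  have hFint : ∀ k, Integrable (F k) (volume.restrict (Set.Ioi 0)) := fun k =>
    (integral_besselTerm hb ha hν k).1.const_mul _
  have hFval : ∀ k, ∫ y in Set.Ioi (0 : ℝ), F k y =
      ((2 * t) ^ (-ν) * Real.exp (-y₁ ^ 2 / (4 * t)) * (2 : ℝ) ^ ((1 - a) / 2) * b ^ (-ν) *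
        (1 / 2)) * ((y₁ ^ 2 / (4 * t) ^ 2 / b) ^ k / k.factorial) := by
    intro k
    have := (hΓ k).ne'
    have hf : (k.factorial : ℝ) ≠ 0 := by positivity
    simp only [hF, hc]
    rw [integral_const_mul, (integral_besselTerm hb ha hν k).2, div_eq_mul_inv (y₁ ^ 2 / _) b,
      mul_pow, ← div_pow, ← pow_mul]
    field_simp
  have hFnorm : ∀ k, ∫ y in Set.Ioi (0 : ℝ), ‖F k y‖ = ∫ y in Set.Ioi (0 : ℝ), F k y := by
    intro k
    refine setIntegral_congr_fun measurableSet_Ioi fun y hy => ?_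
    have hy : (0 : ℝ) < y := hy
    exact Real.norm_of_nonneg (mul_nonneg (hc0 k) (by positivity))
  have hexp : HasSum (fun k : ℕ => (y₁ ^ 2 / (4 * t) ^ 2 / b) ^ k / (k.factorial : ℝ))
      (Real.exp (y₁ ^ 2 / (4 * t) ^ 2 / b)) := by
    rw [Real.exp_eq_exp_ℝ]
    exact NormedSpace.expSeries_div_hasSum_exp _
  have hsum := hasSum_integral_of_summable_integral_norm hFint (by
    simp_rw [hFnorm, hFval]
    exact hexp.summable.mul_left _)
  simp_rw [hFval] at hsum
  have hkey := hsum.unique (hexp.mul_left _)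
  have hcongr : ∫ y in Set.Ioi (0 : ℝ), Real.exp (-θ * y ^ 2) *
      (besselHeatKernel a y₁ y t * y ^ a) = ∫ y in Set.Ioi (0 : ℝ), ∑' k, F k y := by
    refine setIntegral_congr_fun measurableSet_Ioi fun y hy => ?_
    have hy : (0 : ℝ) < y := hy
    have hE : Real.exp (-θ * y ^ 2) * Real.exp (-(y₁ ^ 2 + y ^ 2) / (4 * t)) =
        Real.exp (-y₁ ^ 2 / (4 * t)) * Real.exp (-b * y ^ 2) := by
      rw [← Real.exp_add, ← Real.exp_add, hbdef]
      congr 1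
      field_simp
      ring
    have e1 : -(1 + a) / 2 = -ν := by rw [hν]; ring
    simp only [besselHeatKernel, e1, ← hν]
    rw [show ∀ p q r s u : ℝ, p * (q * r * s * u) = (p * r * q * u) * s by intros; ring, hE,
      ← tsum_mul_left]
    refine tsum_congr fun k => ?_
    simp only [hF, hc]
    rw [Real.rpow_add hy, show (2 : ℝ) * k = ((2 * k : ℕ) : ℝ) by push_cast; ring,
      Real.rpow_natCast, mul_div_right_comm y₁ y, mul_pow]
    ring
  rw [hcongr, hkey, ← hν]
  have hpos : 0 < 1 + 4 * t * θ := by positivity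
  have hb2 : (2 * t) * 2 * b = 1 + 4 * t * θ := by
    rw [hbdef]; field_simp; ring
  have h2 : (2 : ℝ) ^ ((1 - a) / 2) * (1 / 2) = 2 ^ (-ν) := by
    rw [show -ν = (1 - a) / 2 + (-1 : ℝ) by rw [hν]; ring, Real.rpow_add two_pos,
      Real.rpow_neg_one]
    norm_num
  have hE2 : Real.exp (-y₁ ^ 2 / (4 * t)) * Real.exp (y₁ ^ 2 / (4 * t) ^ 2 / b) =
      Real.exp (-(y₁ ^ 2 * θ / (1 + 4 * t * θ))) := by
    rw [← Real.exp_add]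
    congr 1
    have : b = (1 + 4 * t * θ) / (4 * t) := by rw [← hb2]; field_simp; ring
    rw [this]
    field_simp
    ring
  rw [← hE2, ← hb2, Real.mul_rpow (by positivity) hb.le, Real.mul_rpow (by positivity) two_pos.le,
    ← h2]
  ring

lemma besselHeatKernel_nonneg {a y₁ y t : ℝ} (ha : -1 < a) (ht : 0 < t) :
    0 ≤ besselHeatKernel a y₁ y t := by
  refine mul_nonneg (by positivity) (tsum_nonneg fun k => ?_)
  have h1 : 0 < Real.Gamma ((k : ℝ) + (a + 1) / 2) :=
    Real.Gamma_pos_of_pos (by have : (0 : ℝ) ≤ k := Nat.cast_nonneg k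
                              linarith)
  have h2 : 0 ≤ (y₁ * y / (4 * t)) ^ (2 * k) := by rw [pow_mul]; positivity
  positivity

/-- A bounded continuous function differs from its value at `(x₁, y₁)` by at most `ε` plus a
multiple of the gauge `(1 - e^{-|x₁-x|²}) + (e^{-y²} - e^{-y₁²})²`: the gauge can be small only near
the point. -/
lemma exists_abs_sub_le_add_gauge {E : Type*} [NormedAddCommGroup E]
    (x₁ : E) {y₁ : ℝ} (hy₁ : 0 ≤ y₁) (φ : E × ℝ → ℝ)
    (hφcont : ContinuousOn φ (Set.univ ×ˢ Set.Ici (0 : ℝ)))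
    (hφbdd : ∃ M : ℝ, ∀ X ∈ Set.univ ×ˢ Set.Ici (0 : ℝ), |φ X| ≤ M) {ε : ℝ} (hε : 0 < ε) :
    ∃ C : ℝ, ∀ x : E, ∀ y : ℝ, 0 ≤ y → |φ (x, y) - φ (x₁, y₁)| ≤
      ε + C * ((1 - Real.exp (-1 * ‖x₁ - x‖ ^ 2)) +
        (Real.exp (-1 * y ^ 2) - Real.exp (-1 * y₁ ^ 2)) ^ 2) := by
  obtain ⟨M, hM⟩ := hφbdd
  have hmem : (x₁, y₁) ∈ (Set.univ ×ˢ Set.Ici (0 : ℝ) : Set (E × ℝ)) := ⟨trivial, hy₁⟩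
  obtain ⟨δ, hδ, hφδ⟩ := Metric.continuousOn_iff.1 hφcont _ hmem ε hε
  -- `y` is recovered from `e^{-y²}` by the continuous function `u ↦ √(-log u)`.
  have hψ : ∀ y : ℝ, 0 ≤ y → √(-Real.log (Real.exp (-1 * y ^ 2))) = y := by
    intro y hy
    rw [Real.log_exp, neg_mul, one_mul, neg_neg, Real.sqrt_sq hy]
  have hψc : ContinuousAt (fun u => √(-Real.log u)) (Real.exp (-1 * y₁ ^ 2)) :=
    (Real.continuousAt_log (Real.exp_pos _).ne').neg.sqrt
  obtain ⟨η, hη, hψη⟩ := Metric.continuousAt_iff.1 hψc δ hδ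
  set κ := min (1 - Real.exp (-1 * δ ^ 2)) (η ^ 2) with hκ
  have hκ0 : 0 < κ := by
    refine lt_min ?_ (by positivity)
    rw [sub_pos, Real.exp_lt_one_iff]
    nlinarith
  have hM0 : 0 ≤ M := (abs_nonneg _).trans (hM _ hmem)
  refine ⟨2 * M / κ, fun x y hy => ?_⟩
  set D₁ := 1 - Real.exp (-1 * ‖x₁ - x‖ ^ 2) with hD₁
  set D₂ := (Real.exp (-1 * y ^ 2) - Real.exp (-1 * y₁ ^ 2)) ^ 2 with hD₂
  have hD₁0 : 0 ≤ D₁ := by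
    rw [hD₁, sub_nonneg, Real.exp_le_one_iff]
    nlinarith [sq_nonneg ‖x₁ - x‖]
  have hD₂0 : 0 ≤ D₂ := sq_nonneg _
  by_cases hlt : D₁ + D₂ < κ
  · have h1 : D₁ < 1 - Real.exp (-1 * δ ^ 2) :=
      lt_of_le_of_lt (by linarith) (hlt.trans_le (min_le_left _ _))
    have h2 : D₂ < η ^ 2 := lt_of_le_of_lt (by linarith) (hlt.trans_le (min_le_right _ _))
    have hx : dist x x₁ < δ := by
      rw [dist_comm, dist_eq_norm]
      have : Real.exp (-1 * δ ^ 2) < Real.exp (-1 * ‖x₁ - x‖ ^ 2) := by linarith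
      rw [Real.exp_lt_exp] at this
      exact lt_of_pow_lt_pow_left₀ 2 hδ.le (by linarith)
    have hy' : dist y y₁ < δ := by
      have := hψη (x := Real.exp (-1 * y ^ 2)) (by
        rw [Real.dist_eq]; exact abs_lt_of_sq_lt_sq h2 hη.le)
      simpa only [hψ y hy, hψ y₁ hy₁] using this
    have := hφδ (x, y) ⟨trivial, hy⟩ (by rw [Prod.dist_eq]; exact max_lt hx hy')
    rw [Real.dist_eq] at this
    have : 0 ≤ 2 * M / κ * (D₁ + D₂) := by positivity
    linarith
  · have h1 : |φ (x, y) - φ (x₁, y₁)| ≤ 2 * M := by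
      have := hM (x, y) ⟨trivial, hy⟩
      have := hM _ hmem
      have := abs_sub (φ (x, y)) (φ (x₁, y₁))
      linarith
    have h2 : 2 * M ≤ 2 * M / κ * (D₁ + D₂) := by
      rw [div_mul_eq_mul_div, le_div_iff₀ hκ0]
      exact mul_le_mul_of_nonneg_left (not_lt.1 hlt) (by positivity)
    linarith

/-- the Dirac delta (approximate identity) property of the kernel
`𝒢(X₁,X,t) = p(x₁,x,t) p^{(a)}(y₁,y,t)`: for every bounded continuous
`φ : ℝⁿ × [0,∞) → ℝ` one has
`∫_{ℝⁿ × (0,∞)} φ(X) 𝒢(X₁,X,t) y^a dX → φ(X₁)` as `t → 0⁺`. -/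
theorem degenerate_heat_kernel_dirac_delta
    (n : ℕ) (hn : 1 ≤ n) (a : ℝ) (ha : a ∈ Set.Ioo (-1 : ℝ) 1)
    (x₁ : EuclideanSpace ℝ (Fin n)) (y₁ : ℝ) (hy₁ : 0 ≤ y₁)
    (φ : EuclideanSpace ℝ (Fin n) × ℝ → ℝ)
    (hφcont : ContinuousOn φ (Set.univ ×ˢ Set.Ici (0 : ℝ)))
    (hφbdd : ∃ M : ℝ, ∀ X ∈ Set.univ ×ˢ Set.Ici (0 : ℝ), |φ X| ≤ M) :
    Tendsto
      (fun t : ℝ => ∫ X : EuclideanSpace ℝ (Fin n) × ℝ in Set.univ ×ˢ Set.Ioi (0 : ℝ),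
        φ X * (gaussKernel' x₁ X.1 t * besselHeatKernel a y₁ X.2 t) * X.2 ^ a)
      (𝓝[>] (0 : ℝ)) (𝓝 (φ (x₁, y₁))) := by
  have ha1 := ha.1
  -- The Laplace transforms of the two factors, as functions of `θ` and `t`.
  set G : ℝ → ℝ → ℝ := fun θ t => (1 + 4 * t * θ) ^ (-(n : ℝ) / 2) with hG
  set L : ℝ → ℝ → ℝ := fun θ t =>
    (1 + 4 * t * θ) ^ (-((a + 1) / 2)) * Real.exp (-(y₁ ^ 2 * θ / (1 + 4 * t * θ))) with hL
  set e₁ : ℝ := Real.exp (-1 * y₁ ^ 2) with he₁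
  have hGlim : Tendsto (G 1) (𝓝[>] 0) (𝓝 1) := by
    have : ContinuousAt (G 1) 0 := by
      refine ContinuousAt.rpow_const (by fun_prop) (Or.inl (by norm_num))
    simpa [hG] using this.tendsto.mono_left nhdsWithin_le_nhds
  have hLlim : ∀ θ, Tendsto (L θ) (𝓝[>] 0) (𝓝 (Real.exp (-(y₁ ^ 2 * θ)))) := by
    intro θ
    have : ContinuousAt (L θ) 0 := by
      refine (ContinuousAt.rpow_const (by fun_prop) (Or.inl (by norm_num))).mul
        (Real.continuous_exp.continuousAt.comp ?_)
      exact (ContinuousAt.div (by fun_prop) (by fun_prop) (by norm_num)).neg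
    simpa [hL] using this.tendsto.mono_left nhdsWithin_le_nhds
  set R : ℝ → ℝ := fun t => (1 - G 1 t) + (L 2 t - 2 * e₁ * L 1 t + e₁ ^ 2) with hR
  have hRlim : Tendsto R (𝓝[>] 0) (𝓝 0) := by
    have h := (hGlim.const_sub 1).add
      (((hLlim 2).sub ((hLlim 1).const_mul (2 * e₁))).add_const (e₁ ^ 2))
    have h2 : Real.exp (-(y₁ ^ 2 * 2)) = e₁ ^ 2 := by
      rw [he₁, ← Real.exp_nat_mul]; congr 1; push_cast; ring
    have h1 : Real.exp (-(y₁ ^ 2 * 1)) = e₁ := by rw [he₁]; congr 1; ring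
    rw [h1, h2] at h
    convert h using 2
    ring
  set μ : Measure (EuclideanSpace ℝ (Fin n) × ℝ) :=
    volume.prod (volume.restrict (Set.Ioi (0 : ℝ))) with hμ
  have hμeq : volume.restrict (Set.univ ×ˢ Set.Ioi (0 : ℝ)) = μ := by
    rw [hμ, Measure.volume_eq_prod, ← Measure.prod_restrict, Measure.restrict_univ]
  have hμpos : ∀ᵐ X ∂μ, X ∈ (Set.univ ×ˢ Set.Ioi (0 : ℝ) : Set (EuclideanSpace ℝ (Fin n) × ℝ)) := by
    rw [← hμeq]
    exact ae_restrict_mem (MeasurableSet.univ.prod measurableSet_Ioi)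
  have hφm : AEStronglyMeasurable φ μ := by
    rw [← hμeq]
    exact (hφcont.mono (Set.prod_mono_right Set.Ioi_subset_Ici_self)).aestronglyMeasurable
      (MeasurableSet.univ.prod measurableSet_Ioi)
  rw [hμeq, Metric.tendsto_nhds]
  intro ε hε
  obtain ⟨C, hC⟩ := exists_abs_sub_le_add_gauge x₁ hy₁ φ hφcont hφbdd (half_pos hε)
  have hCR : Tendsto (fun t => ε / 2 + C * R t) (𝓝[>] 0) (𝓝 (ε / 2)) := by
    simpa using (hRlim.const_mul C).const_add (ε / 2)
  filter_upwards [hCR.eventually (gt_mem_nhds (half_lt_self hε)), self_mem_nhdsWithin]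
    with t htR ht
  have ht : 0 < t := ht
  set P : ℝ → EuclideanSpace ℝ (Fin n) → ℝ := fun θ x =>
    Real.exp (-θ * ‖x₁ - x‖ ^ 2) * gaussKernel' x₁ x t with hP
  set Q : ℝ → ℝ → ℝ := fun θ y =>
    Real.exp (-θ * y ^ 2) * (besselHeatKernel a y₁ y t * y ^ a) with hQ
  have hPint : ∀ θ, 0 ≤ θ → ∫ x, P θ x = G θ t := fun θ hθ =>
    integral_exp_mul_gaussKernel' x₁ ht hθ
  have hQint : ∀ θ, 0 ≤ θ → ∫ y in Set.Ioi (0 : ℝ), Q θ y = L θ t := fun θ hθ =>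
    integral_exp_mul_besselHeatKernel ha1 ht hθ
  -- A function with nonzero Bochner integral is integrable.
  have hPi : ∀ θ, 0 ≤ θ → Integrable (P θ) := fun θ hθ =>
    .of_integral_ne_zero (by rw [hPint θ hθ]; positivity)
  have hQi : ∀ θ, 0 ≤ θ → Integrable (Q θ) (volume.restrict (Set.Ioi 0)) := fun θ hθ =>
    .of_integral_ne_zero (by rw [hQint θ hθ]; positivity)
  have hPQi : ∀ θ θ', 0 ≤ θ → 0 ≤ θ' →
      Integrable (fun X : EuclideanSpace ℝ (Fin n) × ℝ => P θ X.1 * Q θ' X.2) μ :=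
    fun θ θ' h h' => (hPi θ h).mul_prod (hQi θ' h')
  have hPQ : ∀ θ θ', 0 ≤ θ → 0 ≤ θ' → ∫ X, P θ X.1 * Q θ' X.2 ∂μ = G θ t * L θ' t := by
    intro θ θ' h h'
    rw [hμ, integral_prod_mul, hPint θ h, hQint θ' h']
  have hG0 : G 0 t = 1 := by simp [hG]
  have hL0 : L 0 t = 1 := by simp [hL]
  have hK : ∀ X : EuclideanSpace ℝ (Fin n) × ℝ,
      gaussKernel' x₁ X.1 t * besselHeatKernel a y₁ X.2 t * X.2 ^ a = P 0 X.1 * Q 0 X.2 := by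
    intro X
    simp only [hP, hQ, neg_zero, zero_mul, Real.exp_zero, one_mul]
    ring
  have i00 := hPQi 0 0 le_rfl le_rfl
  have i10 := hPQi 1 0 zero_le_one le_rfl
  have i01 := hPQi 0 1 le_rfl zero_le_one
  have i02 := hPQi 0 2 le_rfl zero_le_two
  have hφK : Integrable (fun X => φ X * (P 0 X.1 * Q 0 X.2)) μ := by
    obtain ⟨M, hM⟩ := hφbdd
    refine i00.bdd_mul (c := M) hφm ?_
    filter_upwards [hμpos] with X hX
    exact hM X ⟨trivial, (Set.mem_Ioi.1 hX.2).le⟩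
  set D : EuclideanSpace ℝ (Fin n) × ℝ → ℝ := fun X =>
    (1 - Real.exp (-1 * ‖x₁ - X.1‖ ^ 2)) + (Real.exp (-1 * X.2 ^ 2) - e₁) ^ 2 with hD
  have hmaj : ∀ X, (ε / 2 + C * D X) * (P 0 X.1 * Q 0 X.2) =
      (ε / 2 + C * (1 + e₁ ^ 2)) * (P 0 X.1 * Q 0 X.2) - C * (P 1 X.1 * Q 0 X.2)
        + C * (P 0 X.1 * Q 2 X.2) - C * (2 * e₁) * (P 0 X.1 * Q 1 X.2) := by
    intro X
    have h2 : Real.exp (-2 * X.2 ^ 2) = Real.exp (-1 * X.2 ^ 2) ^ 2 := by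
      rw [← Real.exp_nat_mul]; congr 1; push_cast; ring
    simp only [hD, hP, hQ, neg_zero, zero_mul, Real.exp_zero, one_mul, h2]
    ring
  have j1 := i00.const_mul (ε / 2 + C * (1 + e₁ ^ 2))
  have j2 := i10.const_mul C
  have j3 := i02.const_mul C
  have j4 := i01.const_mul (C * (2 * e₁))
  have hmaji : Integrable (fun X => (ε / 2 + C * D X) * (P 0 X.1 * Q 0 X.2)) μ := by
    simp_rw [hmaj]
    exact ((j1.sub j2).add j3).sub j4
  have hmajint : ∫ X, (ε / 2 + C * D X) * (P 0 X.1 * Q 0 X.2) ∂μ = ε / 2 + C * R t := by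
    simp_rw [hmaj]
    rw [integral_sub (by exact (j1.sub j2).add j3) j4, integral_add (by exact j1.sub j2) j3,
      integral_sub j1 j2]
    simp only [integral_const_mul]
    rw [hPQ 0 0 le_rfl le_rfl, hPQ 1 0 zero_le_one le_rfl, hPQ 0 1 le_rfl zero_le_one,
      hPQ 0 2 le_rfl zero_le_two, hG0, hL0]
    simp only [hR]
    ring
  have hint : ∫ X, φ X * (gaussKernel' x₁ X.1 t * besselHeatKernel a y₁ X.2 t) * X.2 ^ a ∂μ
      - φ (x₁, y₁) = ∫ X, (φ X - φ (x₁, y₁)) * (P 0 X.1 * Q 0 X.2) ∂μ := by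
    simp_rw [sub_mul, mul_assoc (φ _), hK]
    rw [integral_sub hφK (i00.const_mul _), integral_const_mul, hPQ 0 0 le_rfl le_rfl, hG0, hL0,
      mul_one, mul_one]
  rw [Real.dist_eq, hint, ← Real.norm_eq_abs]
  refine (norm_integral_le_of_norm_le hmaji ?_).trans_lt (hmajint ▸ htR)
  filter_upwards [hμpos] with X hX
  have hy : 0 < X.2 := hX.2
  have hK0 : 0 ≤ P 0 X.1 * Q 0 X.2 := by
    have := besselHeatKernel_nonneg (y₁ := y₁) (y := X.2) ha1 ht
    rw [← hK]
    unfold gaussKernel'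
    have := Real.pi_pos
    positivity
  rw [norm_mul, Real.norm_of_nonneg hK0, Real.norm_eq_abs]
  exact mul_le_mul_of_nonneg_right (hC X.1 X.2 hy.le) hK0
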